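/- Let n ≥ 3 be an integer and let u : ℝⁿ → ℝ be a smooth positive function satisfying −Δu = n(n−2) u^{(n+2)/(n−2)} on all of ℝⁿ. Then there exist λ > 0 and x₀ ∈ ℝⁿ such that u(x) = λ^{(n−2)/2} (1 + λ²|x−x₀|²)^{−(n−2)/2} for all x ∈ ℝⁿ. -/

import Mathlib

/-- The Euclidean Laplacian `Δu = ∑ i, ∂²u/∂xᵢ²` of a function on `ℝⁿ`. -/
noncomputable def lap {n : ℕ} (f : EuclideanSpace ℝ (Fin n) → ℝ)
    (x : EuclideanSpace ℝ (Fin n)) : ℝ :=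
  ∑ i, fderiv ℝ (fun y => fderiv ℝ f y (EuclideanSpace.single i 1)) x
    (EuclideanSpace.single i 1)

/-!
The proof is by the method of moving spheres. Fix a centre `c` and compare `u` with its Kelvin
transform in the sphere of radius `r` about `c`, which solves the same equation. For small `r`, `u`
lies above its Kelvin transform outside the sphere; by the strong maximum principle and the Hopf
lemma this can only stop at a radius for which `u` equals its Kelvin transform.

If it never stopped at any centre, then `u` would be constant, which the equation forbids. So it
stops at some centre, which determines `lim |y|^(d-2) u(y)`, and the finiteness of this limit makes
it stop at every centre. Then `v = u^(-2/(d-2))` satisfies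
`v(y) = A |y-x|² + Dv(x)(y-x) + o(|y|)` at infinity for every `x`, with the same `A`. Comparing two
values of `x` shows that `v` is a quadratic polynomial `A |y-b|² + C`, and the equation at `b` gives
`A C = 1`.
-/

open Filter Topology Set Metric Module Bornology Asymptotics Laplacian InnerProductSpace
open EuclideanGeometry (inversion inversion_eq_lineMap inversion_inversion inversion_of_mem_sphere
  inversion_vsub_center dist_inversion_center hasFDerivAt_inversion)
open AffineMap (lineMap lineMap_apply lineMap_apply_one lineMap_lineMap_right hasDerivAt_lineMap)
open scoped Gradient RealInnerProductSpace

namespace CriticalEquation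

section Calculus

theorem rpow_eq_sq_rpow_half {t : ℝ} (ht : 0 ≤ t) (p : ℝ) : t ^ p = (t ^ 2) ^ (p / 2) := by
  rw [← Real.rpow_natCast_mul ht]
  congr 1
  push_cast
  ring

variable {E F G : Type*} [NormedAddCommGroup E] [InnerProductSpace ℝ E]
  [NormedAddCommGroup F] [NormedSpace ℝ F] [NormedAddCommGroup G] [NormedSpace ℝ G]

theorem differentiableAt_fderiv {f : F → G} {x : F} (hf : ContDiffAt ℝ 2 f x) :
    DifferentiableAt ℝ (fderiv ℝ f) x :=
  (hf.fderiv_right (m := 1) (by norm_num)).differentiableAt one_ne_zero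

theorem hasFDerivAt_fderiv_apply {f : F → G} {x : F} (hf : ContDiffAt ℝ 2 f x) (v : F) :
    HasFDerivAt (fun y => fderiv ℝ f y v) ((fderiv ℝ (fderiv ℝ f) x).flip v) x := by
  simpa using (differentiableAt_fderiv hf).hasFDerivAt.clm_apply (hasFDerivAt_const v x)

theorem hasFDerivAt_dist_sq (c x : E) :
    HasFDerivAt (fun y => dist y c ^ 2) ((2 : ℝ) • innerSL ℝ (x - c)) x := by
  have := ((hasFDerivAt_id x).sub_const c).norm_sq
  simpa [dist_eq_norm, ofNat_smul_eq_nsmul] using this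

theorem contDiff_dist_sq {n : WithTop ℕ∞} (c : E) : ContDiff ℝ n fun y : E => dist y c ^ 2 := by
  simp only [dist_eq_norm]
  exact (contDiff_id.sub contDiff_const).norm_sq ℝ

theorem contDiffAt_dist_rpow {n : WithTop ℕ∞} {c x : E} (hx : x ≠ c) (p : ℝ) :
    ContDiffAt ℝ n (fun y => dist y c ^ p) x := by
  simp only [rpow_eq_sq_rpow_half dist_nonneg p]
  exact (contDiff_dist_sq c).contDiffAt.rpow_const_of_ne (pow_ne_zero 2 (dist_ne_zero.2 hx))

variable [FiniteDimensional ℝ E]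

theorem laplacian_eq_sum_fderiv_fderiv {ι : Type*} [Fintype ι] (b : OrthonormalBasis ι ℝ E)
    (f : E → F) (x : E) : Δ f x = ∑ i, fderiv ℝ (fderiv ℝ f) x (b i) (b i) := by
  simp [laplacian_eq_iteratedFDeriv_orthonormalBasis f b, iteratedFDeriv_two_apply]

theorem lap_eq_laplacian {n : ℕ} {f : EuclideanSpace ℝ (Fin n) → ℝ}
    (hf : ContDiff ℝ 2 f) : lap f = Δ f := by
  ext x
  simp [lap, laplacian_eq_sum_fderiv_fderiv (EuclideanSpace.basisFun (Fin n) ℝ),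
    (hasFDerivAt_fderiv_apply hf.contDiffAt _).fderiv]

theorem laplacian_comp {ι : Type*} [Fintype ι] (b : OrthonormalBasis ι ℝ E) {u : F → G}
    {φ : E → F} {x : E} (hu : ContDiffAt ℝ 2 u (φ x)) (hφ : ContDiffAt ℝ 2 φ x) :
    Δ (u ∘ φ) x = ∑ i, fderiv ℝ (fderiv ℝ u) (φ x) (fderiv ℝ φ x (b i)) (fderiv ℝ φ x (b i))
      + fderiv ℝ u (φ x) (Δ φ x) := by
  have hφ' : DifferentiableAt ℝ φ x := hφ.differentiableAt two_ne_zero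
  have hu' : DifferentiableAt ℝ (fderiv ℝ u) (φ x) := differentiableAt_fderiv hu
  have hd : fderiv ℝ (u ∘ φ) =ᶠ[𝓝 x] fun y => (fderiv ℝ u (φ y)).comp (fderiv ℝ φ y) := by
    filter_upwards [hφ.continuousAt.eventually (hu.eventually (by simp)), hφ.eventually (by simp)]
      with y huy hφy
    exact fderiv_comp y (huy.differentiableAt two_ne_zero) (hφy.differentiableAt two_ne_zero)
  have hdd : HasFDerivAt (fderiv ℝ (u ∘ φ)) _ x :=
    ((hu'.hasFDerivAt.comp x hφ'.hasFDerivAt).clm_comp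
      (differentiableAt_fderiv hφ).hasFDerivAt).congr_of_eventuallyEq hd
  simp [laplacian_eq_sum_fderiv_fderiv b, hdd.fderiv, Finset.sum_add_distrib, add_comm]

theorem laplacian_comp_real {f : ℝ → G} {g : E → ℝ} {x : E} (hf : ContDiffAt ℝ 2 f (g x))
    (hg : ContDiffAt ℝ 2 g x) :
    Δ (f ∘ g) x = ‖∇ g x‖ ^ 2 • deriv (deriv f) (g x) + Δ g x • deriv f (g x) := by
  have b := stdOrthonormalBasis ℝ E
  have hf' (a : ℝ) : fderiv ℝ (fderiv ℝ f) (g x) a a = a ^ 2 • deriv (deriv f) (g x) := by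
    have h := iteratedFDeriv_two_apply (𝕜 := ℝ) f (g x) ![a, a]
    simp only [iteratedFDeriv_apply_eq_iteratedDeriv_mul_prod, Fin.prod_univ_two,
      Matrix.cons_val_zero, Matrix.cons_val_one] at h
    rw [sq, ← iteratedDeriv_one (f := f), ← iteratedDeriv_succ]
    exact h.symm
  have hn : ‖∇ g x‖ ^ 2 = ∑ i, (fderiv ℝ g x (b i)) ^ 2 := by
    simp [← b.sum_sq_inner_left, inner_gradient_left]
  simp only [laplacian_comp b hf hg, hn, Finset.sum_smul, hf']
  simp only [fderiv_eq_smul_deriv]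

theorem laplacian_comp_of_conformal {u : E → G} {φ : E → E} {x : E} {q : ℝ} {L : E ≃ₗᵢ[ℝ] E}
    (hu : ContDiffAt ℝ 2 u (φ x)) (hφ : ContDiffAt ℝ 2 φ x)
    (hL : fderiv ℝ φ x = q • (L : E →L[ℝ] E)) :
    Δ (u ∘ φ) x = q ^ 2 • Δ u (φ x) + fderiv ℝ u (φ x) (Δ φ x) := by
  have b := stdOrthonormalBasis ℝ E
  rw [laplacian_comp b hu hφ, hL, laplacian_eq_sum_fderiv_fderiv (b.map L) u, Finset.smul_sum]
  simp [pow_two, mul_smul]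

theorem laplacian_smul_apply {h : E → ℝ} {f : E → F} {x : E} (hh : ContDiffAt ℝ 2 h x)
    (hf : ContDiffAt ℝ 2 f x) :
    Δ (h • f) x = h x • Δ f x + Δ h x • f x + (2 : ℝ) • fderiv ℝ f x (∇ h x) := by
  have b := stdOrthonormalBasis ℝ E
  have hd (v : E) : (fun y => fderiv ℝ (h • f) y v) =ᶠ[𝓝 x]
      fun y => h y • fderiv ℝ f y v + fderiv ℝ h y v • f y := by
    filter_upwards [hh.eventually (by simp), hf.eventually (by simp)] with y hhy hfy
    simp [fderiv_smul (hhy.differentiableAt two_ne_zero) (hfy.differentiableAt two_ne_zero)]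
  have hdd (v : E) : fderiv ℝ (fderiv ℝ (h • f)) x v v =
      h x • fderiv ℝ (fderiv ℝ f) x v v + fderiv ℝ (fderiv ℝ h) x v v • f x +
        (2 : ℝ) • ⟪v, ∇ h x⟫ • fderiv ℝ f x v := by
    have h₁ := (hasFDerivAt_fderiv_apply (hh.smul hf) v).unique <|
      (((hh.differentiableAt two_ne_zero).hasFDerivAt.smul (hasFDerivAt_fderiv_apply hf v)).add
        ((hasFDerivAt_fderiv_apply hh v).smul (hf.differentiableAt two_ne_zero).hasFDerivAt)
          ).congr_of_eventuallyEq (hd v)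
    refine (DFunLike.congr_fun h₁ v).trans ?_
    simp only [add_apply, smul_apply, ContinuousLinearMap.flip_apply,
      ContinuousLinearMap.smulRight_apply, inner_gradient_right, Real.ringHom_apply]
    module
  rw [← b.sum_repr' (∇ h x)]
  simp only [laplacian_eq_sum_fderiv_fderiv b, hdd, Finset.sum_add_distrib, Finset.smul_sum,
    Finset.sum_smul, map_sum, map_smul]

theorem laplacian_sub_const (c x : E) : Δ (fun y : E => y - c) x = 0 := by
  have h : fderiv ℝ (fun y : E => y - c) = fun _ => .id ℝ E := by ext; simp [fderiv_sub_const]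
  simp [laplacian_eq_sum_fderiv_fderiv (stdOrthonormalBasis ℝ E), h]

theorem gradient_dist_sq (c x : E) : ∇ (fun y => dist y c ^ 2) x = (2 : ℝ) • (x - c) := by
  refine ext_inner_right ℝ fun v => ?_
  rw [inner_gradient_left, (hasFDerivAt_dist_sq c x).fderiv]
  simp only [smul_apply, innerSL_apply_apply, inner_smul_left, smul_eq_mul, conj_trivial]

theorem laplacian_dist_sq (c x : E) : Δ (fun y => dist y c ^ 2) x = 2 * finrank ℝ E := by
  have hd : fderiv ℝ (fun y => dist y c ^ 2) = fun x => (2 : ℝ) • innerSL ℝ (x - c) :=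
    funext fun x => (hasFDerivAt_dist_sq c x).fderiv
  have hdd : HasFDerivAt (fun x => (2 : ℝ) • innerSL ℝ (x - c)) ((2 : ℝ) • innerSL ℝ (E := E)) x :=
    ((innerSL ℝ (E := E)).hasFDerivAt.comp x ((hasFDerivAt_id x).sub_const c)).const_smul (2 : ℝ)
  rw [laplacian_eq_sum_fderiv_fderiv (stdOrthonormalBasis ℝ E), hd, hdd.fderiv]
  simp [innerSL_apply_apply ℝ, mul_comm]

theorem gradient_dist_rpow {c x : E} (hx : x ≠ c) (p : ℝ) :
    ∇ (fun y => dist y c ^ p) x = (p * dist x c ^ (p - 2)) • (x - c) := by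
  have hd := (hasFDerivAt_dist_sq c x).rpow_const (p := p / 2)
    (Or.inl (pow_ne_zero 2 (dist_ne_zero.2 hx)))
  simp only [rpow_eq_sq_rpow_half dist_nonneg p, rpow_eq_sq_rpow_half dist_nonneg (p - 2)]
  refine ext_inner_right ℝ fun v => ?_
  rw [inner_gradient_left, hd.fderiv]
  simp only [smul_apply, innerSL_apply_apply, inner_smul_left, smul_eq_mul, conj_trivial]
  ring_nf

theorem laplacian_dist_rpow {c x : E} (hx : x ≠ c) (p : ℝ) :
    Δ (fun y => dist y c ^ p) x = p * (p + finrank ℝ E - 2) * dist x c ^ (p - 2) := by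
  have hd : 0 < dist x c := dist_pos.2 hx
  have hf : (fun y => dist y c ^ p) = (fun t : ℝ => t ^ (p / 2)) ∘ (fun y => dist y c ^ 2) :=
    funext fun y => rpow_eq_sq_rpow_half dist_nonneg p
  have hdd : deriv (deriv fun t : ℝ => t ^ (p / 2)) (dist x c ^ 2) =
      p / 2 * ((p / 2 - 1) * (dist x c ^ 2) ^ (p / 2 - 1 - 1)) := by
    rw [Real.deriv_rpow_const', deriv_const_mul_field, Real.deriv_rpow_const]
  have hp₁ : (dist x c ^ 2) ^ (p / 2 - 1) = dist x c ^ (p - 2) := by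
    rw [rpow_eq_sq_rpow_half dist_nonneg]
    ring_nf
  have hp₂ : (dist x c ^ 2) ^ (p / 2 - 1 - 1) * dist x c ^ 2 = dist x c ^ (p - 2) := by
    rw [← hp₁, ← Real.rpow_add_one (by positivity), sub_add_cancel]
  rw [hf, laplacian_comp_real (Real.contDiffAt_rpow_const_of_ne (by positivity))
    (contDiff_dist_sq c).contDiffAt, gradient_dist_sq, laplacian_dist_sq, hdd,
    Real.deriv_rpow_const, norm_smul, ← dist_eq_norm, hp₁, ← hp₂]
  simp only [Real.norm_ofNat, smul_eq_mul]
  ring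

end Calculus

section MaximumPrinciple

theorem isPreconnected_compl_closedBall {V : Type*} [NormedAddCommGroup V] [NormedSpace ℝ V]
    (hV : 1 < Module.rank ℝ V) (c : V) (r : ℝ) :
    IsPreconnected (closedBall c r)ᶜ := by
  rcases lt_or_ge r 0 with hr | hr
  · simpa [closedBall_eq_empty.2 hr] using isPreconnected_univ
  have himage : (closedBall c r)ᶜ = (fun p : ℝ × V => p.1 • p.2 + c) '' Ioi r ×ˢ sphere 0 1 := by
    ext y
    simp only [mem_compl_iff, mem_closedBall, not_le, mem_image, mem_prod, mem_Ioi,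
      mem_sphere_zero_iff_norm, Prod.exists]
    constructor
    · intro hy
      have hy' : ‖y - c‖ ≠ 0 := by rw [← dist_eq_norm]; linarith
      refine ⟨dist y c, ‖y - c‖⁻¹ • (y - c), ⟨hy, ?_⟩, ?_⟩
      · rw [norm_smul, norm_inv, norm_norm, inv_mul_cancel₀ hy']
      · rw [dist_eq_norm, smul_inv_smul₀ hy', sub_add_cancel]
    · rintro ⟨t, z, ⟨ht, hz⟩, rfl⟩
      simpa [dist_eq_norm, norm_smul, hz] using ht.trans_le (le_abs_self t)
  rw [himage]
  exact (isPreconnected_Ioi.prod (isPreconnected_sphere hV 0 1)).image _ (by fun_prop)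

theorem deriv_deriv_nonneg_of_isLocalMin {φ : ℝ → ℝ} {a : ℝ} (h : IsLocalMin φ a)
    (hφ : ContinuousAt φ a) : 0 ≤ deriv (deriv φ) a := by
  by_contra! hneg
  have hmax : IsLocalMax φ a := isLocalMax_of_deriv_deriv_neg hneg h.deriv_eq_zero hφ
  have hconst : φ =ᶠ[𝓝 a] fun _ => φ a := by
    filter_upwards [h, hmax] with t h₁ h₂ using le_antisymm h₂ h₁
  simp [hconst.deriv.deriv_eq] at hneg

variable {E : Type*} [NormedAddCommGroup E] [InnerProductSpace ℝ E]

theorem fderiv_fderiv_nonneg_of_isLocalMin {f : E → ℝ} {x : E} (hf : ContDiffAt ℝ 2 f x)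
    (h : IsLocalMin f x) (v : E) : 0 ≤ fderiv ℝ (fderiv ℝ f) x v v := by
  have hγ (t : ℝ) : HasDerivAt (fun t : ℝ => x + t • v) v t := by
    simpa using ((hasDerivAt_id t).smul_const v).const_add x
  have hγ₀ : x + (0 : ℝ) • v = x := by simp
  have hd : deriv (fun t : ℝ => f (x + t • v)) =ᶠ[𝓝 0] fun t => fderiv ℝ f (x + t • v) v := by
    have hev : ∀ᶠ y in 𝓝 (x + (0 : ℝ) • v), ContDiffAt ℝ 2 f y := by
      rw [hγ₀]; exact hf.eventually (by simp)
    filter_upwards [(hγ 0).continuousAt.eventually hev] with t ht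
    exact ((ht.differentiableAt two_ne_zero).hasFDerivAt.comp_hasDerivAt t (hγ t)).deriv
  have hdd : deriv (deriv fun t : ℝ => f (x + t • v)) 0 = fderiv ℝ (fderiv ℝ f) x v v := by
    rw [hd.deriv_eq]
    exact ((hasFDerivAt_fderiv_apply hf v).comp_hasDerivAt_of_eq 0 (hγ 0) hγ₀.symm).deriv
  rw [← hdd]
  refine deriv_deriv_nonneg_of_isLocalMin ?_
    (hf.continuousAt.comp_of_eq (hγ 0).continuousAt hγ₀)
  exact IsLocalMin.comp_continuous (g := fun t : ℝ => x + t • v) (by rwa [hγ₀]) (hγ 0).continuousAt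

variable [FiniteDimensional ℝ E]

theorem laplacian_nonneg_of_isLocalMin {f : E → ℝ} {x : E} (hf : ContDiffAt ℝ 2 f x)
    (h : IsLocalMin f x) : 0 ≤ Δ f x := by
  rw [laplacian_eq_sum_fderiv_fderiv (stdOrthonormalBasis ℝ E)]
  exact Finset.sum_nonneg fun i _ => fderiv_fderiv_nonneg_of_isLocalMin hf h _

theorem nonneg_of_laplacian_neg {Ω : Set E} (hΩ : IsOpen Ω) (hb : Bornology.IsBounded Ω)
    {f : E → ℝ} (hf : ContinuousOn f (closure Ω)) (hf₂ : ∀ x ∈ Ω, ContDiffAt ℝ 2 f x)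
    (hΔ : ∀ x ∈ Ω, Δ f x < 0) (hfr : ∀ x ∈ frontier Ω, 0 ≤ f x) :
    ∀ x ∈ closure Ω, 0 ≤ f x := by
  intro x hx
  obtain ⟨z, hz, hmin⟩ := hb.isCompact_closure.exists_isMinOn ⟨x, hx⟩ hf
  have hzΩ : z ∉ Ω := fun hzΩ => (hΔ z hzΩ).not_ge <| laplacian_nonneg_of_isLocalMin (hf₂ z hzΩ) <|
    hmin.isLocalMin (mem_of_superset (hΩ.mem_nhds hzΩ) subset_closure)
  exact (hfr z ⟨hz, by rwa [hΩ.interior_eq]⟩).trans (hmin hx)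

theorem laplacian_mul_dist_rpow_add {c x : E} (hx : x ≠ c) (A B : ℝ) :
    Δ (fun y => A * dist y c ^ (2 - finrank ℝ E : ℝ) + B) x = 0 := by
  have hd := contDiffAt_dist_rpow (n := 2) hx (2 - finrank ℝ E)
  have hB : ContDiffAt ℝ 2 (fun _ : E => B) x := contDiffAt_const
  refine ((hd.const_smul A).laplacian_add hB).trans ?_
  have hA := laplacian_smul A hd
  rw [laplacian_dist_rpow hx, sub_add_cancel, sub_self, mul_zero, zero_mul, smul_zero] at hA
  rw [laplacian_const, Pi.zero_apply, add_zero]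
  exact hA

section Nontrivial

variable [Nontrivial E]

theorem nonneg_of_laplacian_nonpos {Ω : Set E} (hΩ : IsOpen Ω) (hb : Bornology.IsBounded Ω)
    {f : E → ℝ} (hf : ContinuousOn f (closure Ω)) (hf₂ : ∀ x ∈ Ω, ContDiffAt ℝ 2 f x)
    (hΔ : ∀ x ∈ Ω, Δ f x ≤ 0) (hfr : ∀ x ∈ frontier Ω, 0 ≤ f x) :
    ∀ x ∈ closure Ω, 0 ≤ f x := by
  intro x hx
  obtain ⟨R, hR⟩ := hb.closure.subset_closedBall 0
  have hδ (δ : ℝ) (hδ : 0 < δ) : 0 ≤ f x + δ * (R ^ 2 - dist x 0 ^ 2) := by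
    have hq (y : E) : ContDiffAt ℝ 2 (fun y : E => δ * (R ^ 2 - dist y 0 ^ 2)) y :=
      (contDiff_const.mul (contDiff_const.sub (contDiff_dist_sq 0))).contDiffAt
    have hΔq (y : E) : Δ (fun y : E => δ * (R ^ 2 - dist y 0 ^ 2)) y = -(2 * δ * finrank ℝ E) := by
      have hdist := (contDiff_dist_sq (n := 2) (0 : E)).contDiffAt (x := y)
      have hconst : ContDiffAt ℝ 2 (fun _ : E => R ^ 2) y := contDiffAt_const
      have hsub := (laplacian_smul δ (hconst.sub hdist)).trans
        (congrArg (δ • ·) (hconst.laplacian_sub hdist))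
      rw [laplacian_dist_sq, laplacian_const, Pi.zero_apply, smul_eq_mul] at hsub
      exact hsub.trans (by ring)
    refine nonneg_of_laplacian_neg (f := f + fun y => δ * (R ^ 2 - dist y 0 ^ 2)) hΩ hb
      (hf.add fun y _ => (hq y).continuousAt.continuousWithinAt)
      (fun y hy => (hf₂ y hy).add (hq y)) (fun y hy => ?_) (fun y hy => ?_) x hx
    · rw [(hf₂ y hy).laplacian_add (hq y), hΔq]
      have := hΔ y hy
      have : 0 < 2 * δ * finrank ℝ E := by have := finrank_pos (R := ℝ) (M := E); positivity
      linarith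
    · have hy' : dist y 0 ≤ R := hR (frontier_subset_closure hy)
      have : dist y 0 ^ 2 ≤ R ^ 2 := by gcongr
      exact add_nonneg (hfr y hy) (mul_nonneg hδ.le (by linarith))
  have hlim : Tendsto (fun δ : ℝ => f x + δ * (R ^ 2 - dist x 0 ^ 2)) (𝓝[>] 0) (𝓝 (f x)) := by
    have : Continuous fun δ : ℝ => f x + δ * (R ^ 2 - dist x 0 ^ 2) := by fun_prop
    simpa using (this.tendsto 0).mono_left nhdsWithin_le_nhds
  exact ge_of_tendsto hlim (eventually_mem_nhdsWithin.mono hδ)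

theorem mul_dist_rpow_add_le_of_superharmonic {f : E → ℝ} {c : E} {r R A B : ℝ} (hr : 0 < r)
    (hf : ContinuousOn f ((dist · c) ⁻¹' Icc r R))
    (hf₂ : ∀ y, dist y c ∈ Ioo r R → ContDiffAt ℝ 2 f y)
    (hΔ : ∀ y, dist y c ∈ Ioo r R → Δ f y ≤ 0)
    (h_r : ∀ y, dist y c = r → A * r ^ (2 - finrank ℝ E : ℝ) + B ≤ f y)
    (h_R : ∀ y, dist y c = R → A * R ^ (2 - finrank ℝ E : ℝ) + B ≤ f y)
    {x : E} (hrx : r ≤ dist x c) (hxR : dist x c ≤ R) :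
    A * dist x c ^ (2 - finrank ℝ E : ℝ) + B ≤ f x := by
  rcases hrx.eq_or_lt with hrx | hrx
  · exact hrx ▸ h_r x hrx.symm
  rcases hxR.eq_or_lt with hxR | hxR
  · exact hxR ▸ h_R x hxR
  have hdist : Continuous (dist · c) := by fun_prop
  set b : E → ℝ := fun y => A * dist y c ^ (2 - finrank ℝ E : ℝ) + B
  have hc {y : E} (hy : r ≤ dist y c) : y ≠ c := dist_pos.1 (hr.trans_le hy)
  have hb {y : E} (hy : r ≤ dist y c) : ContDiffAt ℝ 2 b y :=
    (contDiffAt_const.mul (contDiffAt_dist_rpow (hc hy) _)).add contDiffAt_const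
  have hcl : closure ((dist · c) ⁻¹' Ioo r R) ⊆ (dist · c) ⁻¹' Icc r R :=
    closure_minimal (preimage_mono Ioo_subset_Icc_self) (isClosed_Icc.preimage hdist)
  refine sub_nonneg.1 <| nonneg_of_laplacian_nonpos (isOpen_Ioo.preimage hdist)
    (isBounded_ball.subset fun y hy => mem_ball.2 hy.2) (f := f - b)
    ((hf.mono hcl).sub fun y hy => (hb (hcl hy).1).continuousAt.continuousWithinAt)
    (fun y hy => (hf₂ y hy).sub (hb hy.1.le)) (fun y hy => ?_) (fun y hy => ?_)
    x (subset_closure ⟨hrx, hxR⟩)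
  · rw [(hf₂ y hy).laplacian_sub (hb hy.1.le), laplacian_mul_dist_rpow_add (hc hy.1.le), sub_zero]
    exact hΔ y hy
  · refine sub_nonneg.2 ?_
    have hy' : dist y c = r ∨ dist y c = R := by
      simpa [frontier_Ioo (hrx.trans hxR)] using hdist.frontier_preimage_subset _ hy
    rcases hy' with h | h <;> simp only [b, h]
    exacts [h_r y h, h_R y h]

end Nontrivial

theorem exists_mul_sub_dist_rpow_le_of_superharmonic (hE : 2 < finrank ℝ E) {f : E → ℝ} {c : E}
    {r R : ℝ} (hr : 0 < r) (hrR : r < R)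
    (hf : ∀ y, dist y c ∈ Icc r R → ContDiffAt ℝ 2 f y)
    (hΔ : ∀ y, dist y c ∈ Ioo r R → Δ f y ≤ 0)
    (h_r : ∀ y, dist y c = r → 0 ≤ f y) (h_R : ∀ y, dist y c = R → 0 < f y) :
    ∃ k > 0, ∀ y, dist y c ∈ Icc r R →
      k * (r ^ (2 - finrank ℝ E : ℝ) - dist y c ^ (2 - finrank ℝ E : ℝ)) ≤ f y := by
  have : Nontrivial E := nontrivial_of_finrank_pos (R := ℝ) (two_pos.trans hE)
  have hcont : ContinuousOn f ((dist · c) ⁻¹' Icc r R) := fun y hy =>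
    (hf y hy).continuousAt.continuousWithinAt
  obtain ⟨z, hz, hmin⟩ := (isCompact_sphere c R).exists_isMinOn
    (NormedSpace.sphere_nonempty.2 (hr.trans hrR).le)
    (hcont.mono fun y hy => by simpa [mem_sphere.1 hy] using hrR.le)
  set p : ℝ := 2 - finrank ℝ E
  have hgap : 0 < r ^ p - R ^ p :=
    sub_pos.2 (Real.rpow_lt_rpow_of_neg hr hrR (sub_neg.2 (mod_cast hE)))
  refine ⟨f z / (r ^ p - R ^ p), div_pos (h_R z hz) hgap, fun y hy => ?_⟩
  have h := mul_dist_rpow_add_le_of_superharmonic (A := -(f z / (r ^ p - R ^ p)))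
    (B := f z / (r ^ p - R ^ p) * r ^ p) hr hcont (fun y hy => hf y (Ioo_subset_Icc_self hy)) hΔ
    (fun w hw => ?_) (fun w hw => ?_) hy.1 hy.2
  · rwa [neg_mul, neg_add_eq_sub, ← mul_sub] at h
  · rw [neg_mul, neg_add_cancel]
    exact h_r w hw
  · rw [neg_mul, neg_add_eq_sub, ← mul_sub, div_mul_cancel₀ _ hgap.ne']
    exact hmin hw

theorem div_rpow_eq_mul_rpow {R ρ : ℝ} (hR : 0 ≤ R) (hρ : 0 ≤ ρ) (a b : ℝ) :
    (R / ρ) ^ (a - b) = R ^ (a - b) * ρ ^ (b - a) := by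
  rw [Real.div_rpow hR hρ, ← neg_sub a b, Real.rpow_neg hρ, div_eq_mul_inv]

theorem mul_div_dist_rpow_le_of_superharmonic (hE : 2 < finrank ℝ E) {f : E → ℝ} {c : E}
    {R m : ℝ} (hR : 0 < R) (hm : 0 ≤ m)
    (hf : ContinuousOn f {y | R ≤ dist y c})
    (hf₂ : ∀ y, R < dist y c → ContDiffAt ℝ 2 f y)
    (hΔ : ∀ y, R < dist y c → Δ f y ≤ 0)
    (hnonneg : ∀ y, R < dist y c → 0 ≤ f y)
    (h_R : ∀ y, dist y c = R → m ≤ f y) {x : E} (hx : R ≤ dist x c) :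
    m * (R / dist x c) ^ (finrank ℝ E - 2 : ℝ) ≤ f x := by
  have : Nontrivial E := nontrivial_of_finrank_pos (R := ℝ) (two_pos.trans hE)
  have hE' : (0 : ℝ) < finrank ℝ E - 2 := sub_pos.2 (mod_cast hE)
  have key : ∀ S > dist x c, m * (R / dist x c) ^ (finrank ℝ E - 2 : ℝ)
      - m * (R / S) ^ (finrank ℝ E - 2 : ℝ) ≤ f x := fun S hS => by
    have hS₀ : 0 < S := hR.trans_le (hx.trans hS.le)
    have h := mul_dist_rpow_add_le_of_superharmonic (A := m * R ^ (finrank ℝ E - 2 : ℝ))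
      (B := -(m * (R / S) ^ (finrank ℝ E - 2 : ℝ))) hR (hf.mono fun y hy => hy.1)
      (fun y hy => hf₂ y hy.1) (fun y hy => hΔ y hy.1) (fun y hy => ?_) (fun y hy => ?_) hx hS.le
    · rwa [mul_assoc, ← div_rpow_eq_mul_rpow hR.le dist_nonneg, ← sub_eq_add_neg] at h
    · rw [mul_assoc, ← div_rpow_eq_mul_rpow hR.le hR.le, div_self hR.ne', Real.one_rpow]
      have : 0 ≤ m * (R / S) ^ (finrank ℝ E - 2 : ℝ) := by positivity
      linarith [h_R y hy]
    · rw [mul_assoc, ← div_rpow_eq_mul_rpow hR.le hS₀.le, add_neg_cancel]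
      exact hnonneg y (by linarith)
  have hlim : Tendsto (fun S => m * (R / dist x c) ^ (finrank ℝ E - 2 : ℝ)
      - m * (R / S) ^ (finrank ℝ E - 2 : ℝ)) atTop
      (𝓝 (m * (R / dist x c) ^ (finrank ℝ E - 2 : ℝ))) := by
    simpa [Real.zero_rpow hE'.ne'] using (((tendsto_const_nhds (x := R)).div_atTop
      tendsto_id).rpow_const (Or.inr hE'.le)).const_mul m |>.const_sub
        (m * (R / dist x c) ^ (finrank ℝ E - 2 : ℝ))
  exact le_of_tendsto hlim ((eventually_gt_atTop _).mono key)

theorem exists_mul_div_dist_rpow_le_of_superharmonic (hE : 2 < finrank ℝ E) {f : E → ℝ} {c : E}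
    {R : ℝ} (hR : 0 < R)
    (hf : ∀ y, R ≤ dist y c → ContDiffAt ℝ 2 f y)
    (hΔ : ∀ y, R < dist y c → Δ f y ≤ 0)
    (hpos : ∀ y, R ≤ dist y c → 0 < f y) :
    ∃ m > 0, ∀ y, R ≤ dist y c → m * (R / dist y c) ^ (finrank ℝ E - 2 : ℝ) ≤ f y := by
  have : Nontrivial E := nontrivial_of_finrank_pos (R := ℝ) (two_pos.trans hE)
  have hcont : ContinuousOn f {y | R ≤ dist y c} := fun y hy =>
    (hf y hy).continuousAt.continuousWithinAt
  obtain ⟨z, hz, hmin⟩ := (isCompact_sphere c R).exists_isMinOn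
    (NormedSpace.sphere_nonempty.2 hR.le) (hcont.mono fun y hy => (mem_sphere.1 hy).ge)
  refine ⟨f z, hpos z (mem_sphere.1 hz).ge, fun y hy => ?_⟩
  exact mul_div_dist_rpow_le_of_superharmonic hE hR (hpos z (mem_sphere.1 hz).ge).le hcont
    (fun y hy => hf y hy.le) hΔ (fun y hy => (hpos y hy.le).le) (fun y hy => hmin hy) hy

theorem pos_on_ball_of_superharmonic (hE : 2 < finrank ℝ E) {f : E → ℝ} {c : E} {R : ℝ}
    (hf : ∀ y ∈ closedBall c R, ContDiffAt ℝ 2 f y) (hΔ : ∀ y ∈ closedBall c R, Δ f y ≤ 0)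
    (hnonneg : ∀ y ∈ closedBall c R, 0 ≤ f y) (hc : 0 < f c) :
    ∀ y ∈ ball c R, 0 < f y := by
  intro y hy
  have hR : 0 < R := pos_of_mem_ball hy
  have : Nontrivial E := nontrivial_of_finrank_pos (R := ℝ) (two_pos.trans hE)
  have hE' : (2 - finrank ℝ E : ℝ) < 0 := sub_neg.2 (mod_cast hE)
  obtain ⟨s₀, hs₀, hball⟩ := Metric.eventually_nhds_iff_ball.1
    ((hf c (mem_closedBall_self hR.le)).continuousAt.eventually (lt_mem_nhds (half_lt_self hc)))
  obtain ⟨s, hs, hs'⟩ := exists_between (lt_min hs₀ hR)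
  have hinner {z : E} (hz : dist z c ≤ s) : f c / 2 < f z :=
    hball z (mem_ball.2 (hz.trans_lt (hs'.trans_le (min_le_left _ _))))
  rcases le_total (dist y c) s with hys | hys
  · exact (half_pos hc).trans (hinner hys)
  set p : ℝ := 2 - finrank ℝ E
  have hgap : 0 < s ^ p - R ^ p :=
    sub_pos.2 (Real.rpow_lt_rpow_of_neg hs (hs'.trans_le (min_le_right _ _)) hE')
  have h := mul_dist_rpow_add_le_of_superharmonic (A := f c / 2 / (s ^ p - R ^ p))
    (B := -(f c / 2 / (s ^ p - R ^ p) * R ^ p)) hs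
    (fun z hz => (hf z (mem_closedBall.2 hz.2)).continuousAt.continuousWithinAt)
    (fun z hz => hf z (mem_closedBall.2 hz.2.le)) (fun z hz => hΔ z (mem_closedBall.2 hz.2.le))
    (fun z hz => ?_) (fun z hz => ?_) hys (mem_ball.1 hy).le
  · refine lt_of_lt_of_le ?_ h
    have : R ^ p < dist y c ^ p := Real.rpow_lt_rpow_of_neg (hs.trans_le hys) (mem_ball.1 hy) hE'
    rw [← sub_eq_add_neg, ← mul_sub]
    exact mul_pos (by positivity) (sub_pos.2 this)
  · rw [← sub_eq_add_neg, ← mul_sub, div_mul_cancel₀ _ hgap.ne']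
    exact (hinner hz.le).le
  · rw [add_neg_cancel]
    exact hnonneg z (mem_closedBall.2 hz.le)

theorem pos_of_superharmonic (hE : 2 < finrank ℝ E) {f : E → ℝ} {Ω : Set E}
    (hΩ : IsOpen Ω) (hΩ' : IsPreconnected Ω) (hf : ∀ y ∈ Ω, ContDiffAt ℝ 2 f y)
    (hΔ : ∀ y ∈ Ω, Δ f y ≤ 0) (hnonneg : ∀ y ∈ Ω, 0 ≤ f y) {x : E} (hx : x ∈ Ω) (hfx : 0 < f x) :
    ∀ y ∈ Ω, 0 < f y := by
  have hsub : Ω ⊆ {y | y ∈ Ω ∧ 0 < f y} := by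
    refine hΩ'.subset_of_closure_inter_subset ?_ ⟨x, hx, hx, hfx⟩ ?_
    · rw [isOpen_iff_mem_nhds]
      rintro y ⟨hy, hfy⟩
      exact inter_mem (hΩ.mem_nhds hy) ((hf y hy).continuousAt.eventually (lt_mem_nhds hfy))
    · rintro z ⟨hz, hzΩ⟩
      refine ⟨hzΩ, ?_⟩
      obtain ⟨δ, hδ, hball⟩ := Metric.isOpen_iff.1 hΩ z hzΩ
      obtain ⟨w, ⟨-, hfw⟩, hzw⟩ := Metric.mem_closure_iff.1 hz (δ / 2) (half_pos hδ)
      have hsub : closedBall w (δ / 2) ⊆ Ω := fun y hy => hball <|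
        calc dist y z ≤ dist y w + dist z w := dist_triangle_right _ _ _
          _ < δ := by linarith [mem_closedBall.1 hy]
      exact pos_on_ball_of_superharmonic hE (fun y hy => hf y (hsub hy))
        (fun y hy => hΔ y (hsub hy)) (fun y hy => hnonneg y (hsub hy)) hfw z hzw
  exact fun y hy => (hsub hy).2

end MaximumPrinciple

section Kelvin

variable {E : Type*} [NormedAddCommGroup E] [InnerProductSpace ℝ E]

/-- The Kelvin transform of `u` in the sphere of centre `c` and radius `r`, normalised for functions
of conformal weight `(d - 2) / 2` in dimension `d`. At `c` itself it takes the junk value `0` when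
`d > 2`. -/
noncomputable def kelvin (u : E → ℝ) (c : E) (r : ℝ) (y : E) : ℝ :=
  (r / dist y c) ^ (finrank ℝ E - 2 : ℝ) * u (inversion c r y)

theorem kelvin_kelvin (u : E → ℝ) {c y : E} {r : ℝ} (hr : 0 < r) (hy : y ≠ c) :
    kelvin (kelvin u c r) c r y = u y := by
  have hd : 0 < dist y c := dist_pos.2 hy
  have hone : r / dist y c * (r / (r ^ 2 / dist y c)) = 1 := by field_simp
  rw [kelvin, kelvin, inversion_inversion c hr.ne', dist_inversion_center, ← mul_assoc,
    ← Real.mul_rpow (by positivity) (by positivity), hone, Real.one_rpow, one_mul]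

theorem kelvin_of_dist_eq (u : E → ℝ) {c y : E} {r : ℝ} (hr : 0 < r) (hy : dist y c = r) :
    kelvin u c r y = u y := by
  rw [kelvin, hy, div_self hr.ne', Real.one_rpow, one_mul, inversion_of_mem_sphere hy]

theorem kelvin_eq_of_forall_lt {u : E → ℝ} {c : E} {r : ℝ} (hr : 0 < r)
    (h : ∀ y, r < dist y c → kelvin u c r y = u y) {y : E} (hy : y ≠ c) : kelvin u c r y = u y := by
  rcases lt_trichotomy (dist y c) r with hyr | hyr | hyr
  · have hd : 0 < dist y c := dist_pos.2 hy
    have hinv : r < dist (inversion c r y) c := by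
      rw [dist_inversion_center, lt_div_iff₀ hd, sq]
      gcongr
    calc kelvin u c r y = kelvin (kelvin u c r) c r y := by
          rw [kelvin, kelvin.eq_def (kelvin u c r), h _ hinv]
      _ = u y := kelvin_kelvin u hr hy
  · exact kelvin_of_dist_eq u hr hyr
  · exact h y hyr

theorem kelvin_pos {u : E → ℝ} (hu : ∀ x, 0 < u x) {c y : E} {r : ℝ} (hr : 0 < r) (hy : y ≠ c) :
    0 < kelvin u c r y :=
  mul_pos (Real.rpow_pos_of_pos (div_pos hr (dist_pos.2 hy)) _) (hu _)

theorem contDiffAt_kelvin {n : ℕ∞} {u : E → ℝ} {c y : E} {r : ℝ} (hr : 0 < r) (hy : y ≠ c)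
    (hu : ContDiffAt ℝ n u (inversion c r y)) : ContDiffAt ℝ n (kelvin u c r) y := by
  have hdist : ContDiffAt ℝ n (dist · c) y := contDiffAt_id.dist ℝ contDiffAt_const hy
  refine ((contDiffAt_const.div hdist (dist_ne_zero.2 hy)).rpow_const_of_ne
    (div_ne_zero hr.ne' (dist_ne_zero.2 hy))).mul ?_
  exact hu.comp y (contDiffAt_const.inversion contDiffAt_const contDiffAt_id hy)

variable [FiniteDimensional ℝ E]

theorem laplacian_inversion {c x : E} (hx : x ≠ c) (r : ℝ) :
    Δ (inversion c r) x =
      (-2 * (finrank ℝ E - 2) * r ^ 2 * dist x c ^ (-4 : ℝ) : ℝ) • (x - c) := by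
  have hρ : ContDiffAt ℝ 2 (fun y => dist y c ^ (-2 : ℝ)) x := contDiffAt_dist_rpow hx _
  have hsub : ContDiffAt ℝ 2 (fun y : E => y - c) x := contDiffAt_id.sub contDiffAt_const
  set f : E → E := (fun y => dist y c ^ (-2 : ℝ)) • fun y => y - c
  have hf : ContDiffAt ℝ 2 f x := hρ.smul hsub
  have hrf : ContDiffAt ℝ 2 (r ^ 2 • f) x := hf.const_smul (r ^ 2)
  have hφ : inversion c r = r ^ 2 • f + fun _ => c := by
    ext y
    simp [f, inversion, div_eq_mul_inv, mul_pow, mul_smul]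
  have hD : fderiv ℝ (fun y : E => y - c) x = .id ℝ E := by ext; simp [fderiv_sub_const]
  rw [hφ, hrf.laplacian_add contDiffAt_const, laplacian_const,
    laplacian_smul _ hf, laplacian_smul_apply hρ hsub, laplacian_sub_const,
    laplacian_dist_rpow hx, gradient_dist_rpow hx, hD, show (-2 - 2 : ℝ) = -4 by norm_num]
  simp only [smul_zero, zero_add, ContinuousLinearMap.id_apply, smul_add, Pi.zero_apply, add_zero]
  module

theorem laplacian_kelvin {u : E → ℝ} {c x : E} {r : ℝ} (hr : 0 < r) (hx : x ≠ c)
    (hu : ContDiffAt ℝ 2 u (inversion c r x)) :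
    Δ (kelvin u c r) x = (r / dist x c) ^ (finrank ℝ E + 2 : ℝ) * Δ u (inversion c r x) := by
  have hd : 0 < dist x c := dist_pos.2 hx
  have hφ : ContDiffAt ℝ 2 (inversion c r) x :=
    contDiffAt_const.inversion contDiffAt_const contDiffAt_id hx
  have hρ := contDiffAt_dist_rpow (n := 2) hx (2 - finrank ℝ E)
  have hk : kelvin u c r = r ^ (finrank ℝ E - 2 : ℝ) •
      ((fun y => dist y c ^ (2 - finrank ℝ E : ℝ)) • (u ∘ inversion c r)) := by
    ext y
    simp [kelvin, div_rpow_eq_mul_rpow hr.le dist_nonneg, mul_assoc]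
  have hcomp := laplacian_comp_of_conformal hu hφ (hasFDerivAt_inversion hx).fderiv
  rw [hk, laplacian_smul _ (hρ.smul (hu.comp x hφ)), laplacian_smul_apply hρ (hu.comp x hφ), hcomp,
    laplacian_dist_rpow hx, gradient_dist_rpow hx, laplacian_inversion hx,
    fderiv_comp x (hu.differentiableAt two_ne_zero) (hφ.differentiableAt two_ne_zero),
    (hasFDerivAt_inversion hx).fderiv]
  simp only [smul_eq_mul, smul_apply, Function.comp_apply, ContinuousLinearMap.comp_apply, map_smul,
    Submodule.reflection_orthogonalComplement_singleton_eq_neg, map_neg,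
    ContinuousLinearEquiv.coe_coe, LinearIsometryEquiv.coe_toContinuousLinearEquiv,
    Real.rpow_sub hr, Real.rpow_sub hd, Real.rpow_neg hd.le, Real.rpow_add (div_pos hr hd),
    Real.div_rpow hr.le hd.le, Real.rpow_natCast, Real.rpow_ofNat]
  field_simp
  ring

end Kelvin

section MovingSpheres

theorem le_of_hasDerivAt_of_eventually_le {f g : ℝ → ℝ} {f' g' a : ℝ} (hf : HasDerivAt f f' a)
    (hg : HasDerivAt g g' a) (ha : f a = g a) (hle : ∀ᶠ t in 𝓝[>] a, f t ≤ g t) : f' ≤ g' := by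
  refine le_of_tendsto_of_tendsto (hasDerivAt_iff_tendsto_slope_left_right.1 hf).2
    (hasDerivAt_iff_tendsto_slope_left_right.1 hg).2 ?_
  filter_upwards [hle, self_mem_nhdsWithin] with t ht hat
  rw [slope_def_field, slope_def_field, ha]
  have : 0 < t - a := sub_pos.2 hat
  gcongr

variable {E : Type*} [NormedAddCommGroup E] [InnerProductSpace ℝ E]

/-- The derivative at `t = 1` of `t ^ ((d - 2) / 2) * u (c + t • (z - c))`, in dimension `d`. Along
a ray from `c`, this weighted function and its composition with `t ↦ t⁻¹` are what a Kelvin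
transform compares. -/
noncomputable def weightedRadialDeriv (u : E → ℝ) (c z : E) : ℝ :=
  (finrank ℝ E - 2) / 2 * u z + fderiv ℝ u z (z - c)

/-- `u` lies above its Kelvin transform outside the sphere of centre `c` and radius `r`: the
relation that the method of moving spheres propagates as `r` grows. -/
def IsGoodRadius (u : E → ℝ) (c : E) (r : ℝ) : Prop :=
  ∀ y, r < dist y c → kelvin u c r y ≤ u y

theorem continuous_weightedRadialDeriv {u : E → ℝ} (hu : ContDiff ℝ 1 u) (c : E) :
    Continuous (weightedRadialDeriv u c) :=
  (continuous_const.mul hu.continuous).add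
    ((hu.continuous_fderiv one_ne_zero).clm_apply (continuous_id.sub continuous_const))

theorem hasDerivAt_rpow_mul_lineMap {u : E → ℝ} (hu : Differentiable ℝ u) (c y : E) {t : ℝ}
    (ht : 0 < t) :
    HasDerivAt (fun t => t ^ ((finrank ℝ E - 2) / 2 : ℝ) * u (lineMap c y t))
      (t ^ ((finrank ℝ E - 2) / 2 - 1 : ℝ) * weightedRadialDeriv u c (lineMap c y t)) t := by
  have h := (Real.hasDerivAt_rpow_const (p := ((finrank ℝ E - 2) / 2 : ℝ)) (Or.inl ht.ne')).mul
    ((hu (lineMap c y t)).hasFDerivAt.comp_hasDerivAt t hasDerivAt_lineMap)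
  refine h.congr_deriv ?_
  have hsub : lineMap c y t - c = t • (y - c) := by simp [lineMap_apply]
  rw [weightedRadialDeriv, hsub, map_smul, smul_eq_mul, Real.rpow_sub_one ht.ne',
    Function.comp_apply]
  field_simp

theorem kelvin_eq_rpow_mul_lineMap (u : E → ℝ) (c : E) {r : ℝ} (hr : 0 ≤ r) (y : E) :
    kelvin u c r y = ((r / dist y c) ^ 2) ^ ((finrank ℝ E - 2) / 2 : ℝ) *
      u (lineMap c y ((r / dist y c) ^ 2)) := by
  rw [kelvin, inversion_eq_lineMap, rpow_eq_sq_rpow_half (by positivity)]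

theorem rpow_mul_kelvin_lineMap (u : E → ℝ) {c y : E} {r t : ℝ} (hr : 0 < r) (hy : dist y c = r)
    (ht : 0 < t) :
    t ^ ((finrank ℝ E - 2) / 2 : ℝ) * kelvin u c r (lineMap c y t) =
      t⁻¹ ^ ((finrank ℝ E - 2) / 2 : ℝ) * u (lineMap c y t⁻¹) := by
  have hdist : r / dist (lineMap c y t) c = t⁻¹ := by
    rw [dist_lineMap_left, Real.norm_of_nonneg ht.le, dist_comm c, hy]
    field_simp
  have hline : lineMap c (lineMap c y t) (t⁻¹ ^ 2) = lineMap c y t⁻¹ := by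
    rw [lineMap_lineMap_right]
    congr 1
    field_simp
  rw [kelvin_eq_rpow_mul_lineMap u c hr.le, hdist, hline, ← mul_assoc,
    ← Real.mul_rpow ht.le (by positivity)]
  congr 2
  field_simp

theorem kelvin_le_of_weightedRadialDeriv_nonneg {u : E → ℝ} (hu : Differentiable ℝ u) {c y : E}
    {r : ℝ} (hr : 0 < r) (hy : r < dist y c)
    (hg : ∀ z, dist z c ∈ Ioo (r ^ 2 / dist y c) (dist y c) → 0 ≤ weightedRadialDeriv u c z) :
    kelvin u c r y ≤ u y := by
  have hd : 0 < dist y c := hr.trans hy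
  have hs : 0 < (r / dist y c) ^ 2 := by positivity
  have hs' : (r / dist y c) ^ 2 ≤ 1 := pow_le_one₀ (by positivity) ((div_le_one hd).2 hy.le)
  have hderiv {t : ℝ} (ht : (r / dist y c) ^ 2 ≤ t) :=
    hasDerivAt_rpow_mul_lineMap hu c y (hs.trans_le ht)
  have hmono : MonotoneOn (fun t => t ^ ((finrank ℝ E - 2) / 2 : ℝ) * u (lineMap c y t))
      (Icc ((r / dist y c) ^ 2) 1) := by
    refine monotoneOn_of_deriv_nonneg (convex_Icc _ _)
      (fun t ht => (hderiv ht.1).continuousAt.continuousWithinAt)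
      (fun t ht => (hderiv (interior_subset ht).1).differentiableAt.differentiableWithinAt)
      fun t ht => ?_
    rw [interior_Icc] at ht
    have ht₀ : 0 < t := hs.trans ht.1
    rw [(hderiv ht.1.le).deriv]
    refine mul_nonneg (by positivity) (hg _ ?_)
    rw [dist_lineMap_left, Real.norm_of_nonneg ht₀.le, dist_comm c]
    refine ⟨?_, mul_lt_of_lt_one_left hd ht.2⟩
    calc r ^ 2 / dist y c = (r / dist y c) ^ 2 * dist y c := by field_simp
      _ < t * dist y c := by gcongr; exact ht.1
  have h := hmono (left_mem_Icc.2 hs') (right_mem_Icc.2 hs') hs'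
  beta_reduce at h
  rwa [← kelvin_eq_rpow_mul_lineMap u c hr.le, Real.one_rpow, one_mul, lineMap_apply_one] at h

theorem hasDerivAt_rpow_mul_sub_kelvin {u : E → ℝ} (hu : Differentiable ℝ u) {c y : E} {r : ℝ}
    (hr : 0 < r) (hy : dist y c = r) :
    HasDerivAt (fun t => t ^ ((finrank ℝ E - 2) / 2 : ℝ) *
      (u (lineMap c y t) - kelvin u c r (lineMap c y t))) (2 * weightedRadialDeriv u c y) 1 := by
  have hG := hasDerivAt_rpow_mul_lineMap hu c y one_pos
  rw [Real.one_rpow, one_mul, lineMap_apply_one] at hG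
  have hGinv := hG.comp_of_eq (1 : ℝ) (hasDerivAt_inv one_ne_zero) inv_one.symm
  refine ((hG.sub hGinv).congr_of_eventuallyEq ?_).congr_deriv (by ring)
  filter_upwards [lt_mem_nhds one_pos] with t ht
  simp [mul_sub, rpow_mul_kelvin_lineMap u hr hy ht]

theorem isGoodRadius_zero {u : E → ℝ} (hE : 2 < finrank ℝ E) (hu : ∀ x, 0 ≤ u x) (c : E) :
    IsGoodRadius u c 0 := by
  intro y _
  have hE' : (finrank ℝ E - 2 : ℝ) ≠ 0 := (sub_pos.2 (mod_cast hE)).ne'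
  rw [kelvin, zero_div, Real.zero_rpow hE', zero_mul]
  exact hu y

theorem continuous_kelvin_radius {u : E → ℝ} (hE : 2 ≤ finrank ℝ E) (hu : Continuous u) (c y : E) :
    Continuous fun r => kelvin u c r y := by
  have hE' : (0 : ℝ) ≤ finrank ℝ E - 2 := sub_nonneg.2 (mod_cast hE)
  simp only [kelvin, inversion_eq_lineMap, lineMap_apply]
  fun_prop (disch := exact Or.inr hE')

theorem isClosed_setOf_isGoodRadius {u : E → ℝ} (hE : 2 ≤ finrank ℝ E) (hu : Continuous u) (c : E) :
    IsClosed {r | IsGoodRadius u c r} := by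
  refine isClosed_iff_frequently.2 fun r hr y hy => not_lt.1 fun hlt => ?_
  have hlt' : ∀ᶠ s in 𝓝 r, u y < kelvin u c s y :=
    (continuous_kelvin_radius hE hu c y).continuousAt.eventually (lt_mem_nhds hlt)
  obtain ⟨s, hs, hlts, hsy⟩ := (hr.and_eventually (hlt'.and (gt_mem_nhds hy))).exists
  exact hlts.not_ge (hs y hsy)

theorem kelvin_eq_div_dist_rpow (u : E → ℝ) (c : E) {r : ℝ} (hr : 0 ≤ r) (y : E) :
    kelvin u c r y = r ^ (finrank ℝ E - 2 : ℝ) *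
      u (r ^ 2 • ((dist y c ^ 2)⁻¹ • (y - c)) + c) / dist y c ^ (finrank ℝ E - 2 : ℝ) := by
  rw [kelvin, Real.div_rpow hr dist_nonneg, inversion, smul_smul, div_pow, div_eq_mul_inv (r ^ 2),
    vsub_eq_sub, vadd_eq_add, div_mul_eq_mul_div]

variable [FiniteDimensional ℝ E]

theorem eventually_forall_dist_eq {p : E → Prop} (c : E) (r : ℝ)
    (hp : ∀ z, dist z c = r → ∀ᶠ y in 𝓝 z, p y) : ∀ᶠ s in 𝓝 r, ∀ z, dist z c = s → p z := by
  have hproper : IsProperMap (dist · c) := isProperMap_iff_tendsto_cocompact.2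
    ⟨by fun_prop, (tendsto_dist_right_cocompact_atTop c).mono_right atTop_le_cocompact⟩
  exact hproper.isClosedMap.eventually_nhds_fiber r hp

-- In the variable `w = (y - c) / |y - c|²` the Kelvin transform becomes continuous up to `y = ∞`,
-- so that its dependence on the radius is uniform far away.
theorem eventually_forall_kelvin_sub_lt {u : E → ℝ} (hE : 2 ≤ finrank ℝ E) (hu : Continuous u)
    (c : E) {l R ε : ℝ} (hl : 0 ≤ l) (hR : 0 < R) (hε : 0 < ε) :
    ∀ᶠ r in 𝓝[≥] l, ∀ y, R ≤ dist y c →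
      kelvin u c r y - kelvin u c l y < ε / dist y c ^ (finrank ℝ E - 2 : ℝ) := by
  have hE' : (0 : ℝ) ≤ finrank ℝ E - 2 := sub_nonneg.2 (mod_cast hE)
  set p : ℝ := finrank ℝ E - 2
  have hunif : ∀ᶠ r in 𝓝 l, ∀ w ∈ closedBall (0 : E) R⁻¹,
      r ^ p * u (r ^ 2 • w + c) - l ^ p * u (l ^ 2 • w + c) < ε := by
    refine (isCompact_closedBall 0 R⁻¹).eventually_forall_of_forall_eventually fun w _ => ?_
    have hcont : Continuous fun z : ℝ × E =>
        z.1 ^ p * u (z.1 ^ 2 • z.2 + c) - l ^ p * u (l ^ 2 • z.2 + c) := by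
      fun_prop (disch := exact fun _ => Or.inr hE')
    exact hcont.continuousAt.eventually_lt_const (by simpa only [sub_self] using hε)
  filter_upwards [nhdsWithin_le_nhds hunif, self_mem_nhdsWithin] with r hr hlr y hy
  have hd : 0 < dist y c := hR.trans_le hy
  have hw : (dist y c ^ 2)⁻¹ • (y - c) ∈ closedBall (0 : E) R⁻¹ := by
    rw [mem_closedBall_zero_iff, norm_smul, ← dist_eq_norm, Real.norm_of_nonneg (by positivity),
      sq, mul_inv, inv_mul_cancel_right₀ hd.ne']
    gcongr
  rw [kelvin_eq_div_dist_rpow u c (hl.trans hlr), kelvin_eq_div_dist_rpow u c hl, ← sub_div]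
  have := hr _ hw
  gcongr

theorem eventually_isGoodRadius {u : E → ℝ} (hE : 2 < finrank ℝ E) (hu : ContDiff ℝ 1 u) {c : E}
    {l R m : ℝ} (hl : 0 ≤ l) (hlR : l < R) (hm : 0 < m)
    (hfar : ∀ y, R ≤ dist y c → m * (R / dist y c) ^ (finrank ℝ E - 2 : ℝ) ≤ u y - kelvin u c l y)
    (hg : ∀ z, dist z c ∈ Ioo (l ^ 2 / R) R → 0 ≤ weightedRadialDeriv u c z) :
    ∀ᶠ r in 𝓝[>] l, IsGoodRadius u c r := by
  have hR : 0 < R := hl.trans_lt hlR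
  have hnear := eventually_forall_kelvin_sub_lt hE.le hu.continuous c hl hR
    (mul_pos hm (Real.rpow_pos_of_pos hR (finrank ℝ E - 2)))
  filter_upwards [nhdsWithin_mono l Ioi_subset_Ici_self hnear, self_mem_nhdsWithin]
    with r hr hlr y hy
  have hr₀ : 0 < r := hl.trans_lt hlr
  rcases lt_or_ge (dist y c) R with hyR | hRy
  · refine kelvin_le_of_weightedRadialDeriv_nonneg (hu.differentiable one_ne_zero) hr₀ hy
      fun z hz => hg z ⟨lt_of_le_of_lt ?_ hz.1, hz.2.trans hyR⟩
    have : l < r := hlr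
    gcongr
    exact hr₀.trans hy
  · have hfar' := hfar y hRy
    rw [Real.div_rpow hR.le dist_nonneg, ← mul_div_assoc] at hfar'
    linarith [hr y hRy]

/-- A positive `C²` solution of the critical equation `-Δu = d (d - 2) u ^ ((d + 2) / (d - 2))` on a
Euclidean space of dimension `d`. -/
structure IsPositiveSolution (u : E → ℝ) : Prop where
  contDiff : ContDiff ℝ 2 u
  pos : ∀ x, 0 < u x
  neg_laplacian : ∀ x, -Δ u x =
    finrank ℝ E * (finrank ℝ E - 2) * u x ^ ((finrank ℝ E + 2) / (finrank ℝ E - 2) : ℝ)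

namespace IsPositiveSolution

variable {u : E → ℝ}

theorem laplacian_neg (hu : IsPositiveSolution u) (hE : 2 < finrank ℝ E) (x : E) : Δ u x < 0 := by
  have hE' : (0 : ℝ) < finrank ℝ E - 2 := sub_pos.2 (mod_cast hE)
  have hux := hu.pos x
  rw [← neg_pos, hu.neg_laplacian]
  positivity

theorem neg_laplacian_kelvin (hu : IsPositiveSolution u) (hE : 2 < finrank ℝ E) {c y : E}
    {r : ℝ} (hr : 0 < r) (hy : y ≠ c) :
    -Δ (kelvin u c r) y = finrank ℝ E * (finrank ℝ E - 2) *
      kelvin u c r y ^ ((finrank ℝ E + 2) / (finrank ℝ E - 2) : ℝ) := by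
  have hE' : (0 : ℝ) < finrank ℝ E - 2 := sub_pos.2 (mod_cast hE)
  have hq : 0 < r / dist y c := div_pos hr (dist_pos.2 hy)
  rw [laplacian_kelvin hr hy hu.contDiff.contDiffAt, kelvin,
    Real.mul_rpow (by positivity) (hu.pos _).le, ← Real.rpow_mul hq.le, mul_div_cancel₀ _ hE'.ne',
    ← mul_neg, hu.neg_laplacian]
  ring

theorem contDiffAt_sub_kelvin (hu : IsPositiveSolution u) {c y : E} {r : ℝ} (hr : 0 < r)
    (hy : y ≠ c) :
    ContDiffAt ℝ 2 (u - kelvin u c r) y :=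
  hu.contDiff.contDiffAt.sub (contDiffAt_kelvin (n := 2) hr hy hu.contDiff.contDiffAt)

theorem laplacian_sub_kelvin_nonpos (hu : IsPositiveSolution u) (hE : 2 < finrank ℝ E) {c y : E}
    {r : ℝ} (hr : 0 < r) (hy : y ≠ c) (hle : kelvin u c r y ≤ u y) :
    Δ (u - kelvin u c r) y ≤ 0 := by
  have hE' : (0 : ℝ) < finrank ℝ E - 2 := sub_pos.2 (mod_cast hE)
  rw [hu.contDiff.contDiffAt.laplacian_sub
    (contDiffAt_kelvin (n := 2) hr hy hu.contDiff.contDiffAt), ← neg_neg (Δ u y),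
    ← neg_neg (Δ (kelvin u c r) y), hu.neg_laplacian, hu.neg_laplacian_kelvin hE hr hy,
    neg_sub_neg, sub_nonpos]
  have := (kelvin_pos hu.pos hr hy).le
  gcongr

theorem kelvin_lt (hu : IsPositiveSolution u) (hE : 2 < finrank ℝ E) {c : E} {r : ℝ} (hr : 0 < r)
    (hgood : IsGoodRadius u c r) {x : E} (hx : r < dist x c) (hne : kelvin u c r x ≠ u x)
    {y : E} (hy : r < dist y c) :
    kelvin u c r y < u y := by
  have hc {z : E} (hz : r < dist z c) : z ≠ c := dist_pos.1 (hr.trans hz)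
  have hΩ : IsOpen {z | r < dist z c} := isOpen_lt continuous_const (by fun_prop)
  have hΩ' : IsPreconnected {z | r < dist z c} := by
    have hrank : 1 < Module.rank ℝ E := by
      rw [← finrank_eq_rank]
      exact_mod_cast one_lt_two.trans hE
    convert isPreconnected_compl_closedBall hrank c r using 1
    ext
    simp
  exact sub_pos.1 <| pos_of_superharmonic hE hΩ hΩ'
    (fun z hz => hu.contDiffAt_sub_kelvin hr (hc hz))
    (fun z hz => hu.laplacian_sub_kelvin_nonpos hE hr (hc hz) (hgood z hz))
    (fun z hz => sub_nonneg.2 (hgood z hz)) hx (sub_pos.2 (lt_of_le_of_ne (hgood x hx) hne)) y hy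

theorem weightedRadialDeriv_pos (hu : IsPositiveSolution u) (hE : 2 < finrank ℝ E) {c : E} {r : ℝ}
    (hr : 0 < r) (hlt : ∀ y, r < dist y c → kelvin u c r y < u y) {y : E} (hy : dist y c = r) :
    0 < weightedRadialDeriv u c y := by
  have hE' : (0 : ℝ) < finrank ℝ E - 2 := sub_pos.2 (mod_cast hE)
  have hc {z : E} (hz : r ≤ dist z c) : z ≠ c := dist_pos.1 (hr.trans_le hz)
  obtain ⟨k, hk, hbarrier⟩ := exists_mul_sub_dist_rpow_le_of_superharmonic hE hr
    (lt_mul_of_one_lt_left hr one_lt_two) (fun z hz => hu.contDiffAt_sub_kelvin hr (hc hz.1))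
    (fun z hz => hu.laplacian_sub_kelvin_nonpos hE hr (hc hz.1.le) (hlt z hz.1).le)
    (fun z hz => sub_nonneg.2 (kelvin_of_dist_eq u hr hz).le)
    (fun z hz => sub_pos.2 (hlt z (by linarith)))
  have hpow := ((hasDerivAt_id (1 : ℝ)).mul_const r).rpow_const (p := (2 - finrank ℝ E : ℝ))
    (Or.inl (by simpa using hr.ne'))
  have hle := le_of_hasDerivAt_of_eventually_le
    ((hpow.const_sub (r ^ (2 - finrank ℝ E : ℝ))).const_mul k)
    (hasDerivAt_rpow_mul_sub_kelvin (hu.contDiff.differentiable two_ne_zero) hr hy)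
    (by simp [kelvin_of_dist_eq u hr hy]) ?_
  · have : 0 < k * (r * (finrank ℝ E - 2) * r ^ (2 - finrank ℝ E - 1 : ℝ)) := by positivity
    simp only [id, one_mul] at hle
    linarith
  · filter_upwards [Ioo_mem_nhdsGT one_lt_two] with t ht
    have ht₀ : 0 < t := one_pos.trans ht.1
    have hdist : dist (lineMap c y t) c = t * r := by
      rw [dist_lineMap_left, Real.norm_of_nonneg ht₀.le, dist_comm c, hy]
    have hrt : r < t * r := lt_mul_of_one_lt_left hr ht.1
    have h := hbarrier (lineMap c y t) (by rw [hdist]; exact ⟨hrt.le, by gcongr; exact ht.2.le⟩)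
    rw [hdist] at h
    exact h.trans (le_mul_of_one_le_left (sub_nonneg.2 (hlt _ (hdist ▸ hrt)).le)
      (Real.one_le_rpow ht.1.le (by positivity)))

theorem eventually_isGoodRadius_zero (hu : IsPositiveSolution u) (hE : 2 < finrank ℝ E) (c : E) :
    ∀ᶠ r in 𝓝[>] 0, IsGoodRadius u c r := by
  have hE' : (0 : ℝ) < finrank ℝ E - 2 := sub_pos.2 (mod_cast hE)
  have hgc : 0 < weightedRadialDeriv u c c := by
    rw [weightedRadialDeriv, sub_self, map_zero, add_zero]
    exact mul_pos (by positivity) (hu.pos c)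
  obtain ⟨R, hR, hg⟩ := Metric.eventually_nhds_iff_ball.1
    ((continuous_weightedRadialDeriv (hu.contDiff.of_le one_le_two) c).continuousAt.eventually
      (lt_mem_nhds hgc))
  obtain ⟨m, hm, hfar⟩ := exists_mul_div_dist_rpow_le_of_superharmonic hE hR
    (fun y _ => hu.contDiff.contDiffAt) (fun y _ => (hu.laplacian_neg hE y).le)
    (fun y (_ : R ≤ dist y c) => hu.pos y)
  refine eventually_isGoodRadius hE (hu.contDiff.of_le one_le_two) le_rfl hR hm (fun y hy => ?_)
    fun z hz => (hg z hz.2).le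
  rw [kelvin, zero_div, Real.zero_rpow hE'.ne', zero_mul, sub_zero]
  exact hfar y hy

theorem eventually_isGoodRadius_of_isGoodRadius (hu : IsPositiveSolution u) (hE : 2 < finrank ℝ E)
    {c : E} {l : ℝ} (hl : 0 < l) (hgood : IsGoodRadius u c l) {x : E} (hx : l < dist x c)
    (hne : kelvin u c l x ≠ u x) :
    ∀ᶠ r in 𝓝[>] l, IsGoodRadius u c r := by
  have hlt (y : E) (hy : l < dist y c) : kelvin u c l y < u y := hu.kelvin_lt hE hl hgood hx hne hy
  have hev := eventually_forall_dist_eq c l fun z hz =>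
    (continuous_weightedRadialDeriv (hu.contDiff.of_le one_le_two) c).continuousAt.eventually
      (lt_mem_nhds (hu.weightedRadialDeriv_pos hE hl hlt hz))
  obtain ⟨a, b, hab, hg⟩ := (mem_nhds_iff_exists_Ioo_subset).1 hev
  have hinner : ∀ᶠ R in 𝓝[>] l, a < l ^ 2 / R := by
    have hcont : ContinuousAt (fun R => l ^ 2 / R) l :=
      continuousAt_const.div continuousAt_id hl.ne'
    have hal : a < l ^ 2 / l := by rw [sq, mul_self_div_self]; exact hab.1
    exact nhdsWithin_le_nhds (hcont.eventually (lt_mem_nhds hal))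
  obtain ⟨R, haR, hlR, hRb⟩ := (hinner.and (Ioo_mem_nhdsGT hab.2)).exists
  have hc {y : E} (hy : R ≤ dist y c) : y ≠ c := dist_pos.1 (hl.trans (hlR.trans_le hy))
  obtain ⟨m, hm, hfar⟩ := exists_mul_div_dist_rpow_le_of_superharmonic hE (hl.trans hlR)
    (fun y hy => hu.contDiffAt_sub_kelvin hl (hc hy))
    (fun y hy => hu.laplacian_sub_kelvin_nonpos hE hl (hc hy.le) (hgood y (hlR.trans hy)))
    (fun y hy => sub_pos.2 (hlt y (hlR.trans_le hy)))
  exact eventually_isGoodRadius hE (hu.contDiff.of_le one_le_two) hl.le hlR hm hfar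
    fun z hz => (hg ⟨haR.trans hz.1, hz.2.trans hRb⟩ z rfl).le

theorem forall_isGoodRadius_or_exists_kelvin_eq (hu : IsPositiveSolution u) (hE : 2 < finrank ℝ E)
    (c : E) :
    (∀ r, 0 ≤ r → IsGoodRadius u c r) ∨ ∃ r > 0, ∀ y, y ≠ c → kelvin u c r y = u y := by
  by_contra! ⟨⟨b, hb, hbad⟩, hne⟩
  refine hbad <| IsClosed.Icc_subset_of_forall_mem_nhdsWithin (s := {r | IsGoodRadius u c r})
    ((isClosed_setOf_isGoodRadius hE.le hu.contDiff.continuous c).inter isClosed_Icc)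
    (isGoodRadius_zero hE (fun x => (hu.pos x).le) c) (fun l hl => ?_) (right_mem_Icc.2 hb)
  rcases hl.2.1.eq_or_lt with rfl | hl₀
  · exact hu.eventually_isGoodRadius_zero hE c
  have hx : ∃ x, l < dist x c ∧ kelvin u c l x ≠ u x := by
    by_contra! h
    obtain ⟨y, hy, hyne⟩ := hne l hl₀
    exact hyne (kelvin_eq_of_forall_lt hl₀ h hy)
  obtain ⟨x, hx, hxne⟩ := hx
  exact hu.eventually_isGoodRadius_of_isGoodRadius hE hl₀ hl.1 hx hxne

end IsPositiveSolution

end MovingSpheres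

section Classification

theorem rpow_mul_rpow_neg_two_div {q r t : ℝ} (hq : q ≠ 0) (hr : 0 ≤ r) (ht : 0 ≤ t) :
    (r ^ q * t) ^ (-(2 / q)) = (r ^ 2)⁻¹ * t ^ (-(2 / q)) := by
  rw [Real.mul_rpow (by positivity) ht, ← Real.rpow_mul hr, mul_neg, mul_div_cancel₀ _ hq,
    Real.rpow_neg hr, Real.rpow_two]

theorem mul_add_rpow_neg_of_mul_eq_one {A C s : ℝ} (hA : 0 < A) (hAC : A * C = 1) (hs : 0 ≤ s)
    (p : ℝ) : (A * s + C) ^ (-p) = A ^ p * (1 + A ^ 2 * s) ^ (-p) := by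
  have hfactor : A * s + C = A⁻¹ * (1 + A ^ 2 * s) := by
    rw [eq_inv_mul_iff_mul_eq₀ hA.ne', mul_add, hAC]
    ring
  rw [hfactor, Real.mul_rpow (by positivity) (by positivity), Real.inv_rpow hA.le,
    Real.rpow_neg hA.le, inv_inv]

theorem tendsto_norm_div_dist_cobounded {V : Type*} [NormedAddCommGroup V] (c : V) :
    Tendsto (fun y => ‖y‖ / dist y c) (cobounded V) (𝓝 1) := by
  have hdist := tendsto_dist_right_cobounded_atTop c
  have hlim : Tendsto (fun y => ‖c‖ / dist y c) (cobounded V) (𝓝 0) := hdist.const_div_atTop _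
  refine tendsto_sub_nhds_zero_iff.1 (squeeze_zero_norm' ?_ hlim)
  filter_upwards [hdist.eventually_gt_atTop 0] with y hy
  rw [div_sub_one hy.ne', norm_div, Real.norm_of_nonneg hy.le]
  gcongr
  simpa [dist_eq_norm] using abs_norm_sub_norm_le y (y - c)

theorem eq_zero_of_isLittleO_cobounded {V : Type*} [NormedAddCommGroup V] [NormedSpace ℝ V]
    {ℓ : V →L[ℝ] ℝ} {a : ℝ} (h : (fun y => ℓ y + a) =o[cobounded V] fun y => ‖y‖) : ℓ = 0 := by
  ext v
  by_contra hv
  have hv₀ : v ≠ 0 := by rintro rfl; simp at hv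
  have hline : Tendsto (fun t : ℝ => t • v) atTop (cobounded V) := by
    refine tendsto_norm_atTop_iff_cobounded.1 ?_
    simp only [norm_smul]
    exact tendsto_norm_atTop_atTop.atTop_mul_const (norm_pos_iff.2 hv₀)
  have hℓ : (fun t : ℝ => ℓ v * t) =o[atTop] fun t : ℝ => ‖v‖ * ‖t‖ := by
    simpa [Function.comp_def, norm_smul, mul_comm] using
      (h.sub (isLittleO_const_id_cobounded a).norm_right).comp_tendsto hline
  have hid : (fun t : ℝ => t) =o[atTop] fun t : ℝ => t :=
    ((isLittleO_const_mul_left_iff hv).1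
      ((isLittleO_const_mul_right_iff (norm_ne_zero_iff.2 hv₀)).1 hℓ)).of_norm_right
  exact isLittleO_irrefl (eventually_ne_atTop 0).frequently hid

variable {E : Type*} [NormedAddCommGroup E] [InnerProductSpace ℝ E]

theorem tendsto_inversion_cobounded (c : E) (r : ℝ) :
    Tendsto (inversion c r) (cobounded E) (𝓝 c) := by
  rw [tendsto_iff_dist_tendsto_zero]
  simp only [dist_inversion_center]
  exact (tendsto_dist_right_cobounded_atTop c).const_div_atTop _

theorem tendsto_norm_rpow_mul_kelvin {u : E → ℝ} (hE : 2 ≤ finrank ℝ E) (hu : Continuous u) (c : E)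
    {r : ℝ} (hr : 0 ≤ r) :
    Tendsto (fun y => ‖y‖ ^ (finrank ℝ E - 2 : ℝ) * kelvin u c r y) (cobounded E)
      (𝓝 (r ^ (finrank ℝ E - 2 : ℝ) * u c)) := by
  have hE' : (0 : ℝ) ≤ finrank ℝ E - 2 := sub_nonneg.2 (mod_cast hE)
  have hratio : Tendsto (fun y => r * (‖y‖ / dist y c)) (cobounded E) (𝓝 r) := by
    simpa using (tendsto_norm_div_dist_cobounded c).const_mul r
  refine (((hratio.rpow_const (Or.inr hE')).mul
    ((hu.tendsto c).comp (tendsto_inversion_cobounded c r))).congr fun y => ?_)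
  rw [kelvin, Function.comp_apply, ← mul_assoc, ← Real.mul_rpow (by positivity) (by positivity)]
  ring_nf

theorem weightedRadialDeriv_nonneg_of_isGoodRadius {u : E → ℝ} (hu : Differentiable ℝ u) {c y : E}
    (hy : y ≠ c) (hgood : IsGoodRadius u c (dist y c)) : 0 ≤ weightedRadialDeriv u c y := by
  have hd : 0 < dist y c := dist_pos.2 hy
  have h := le_of_hasDerivAt_of_eventually_le (hasDerivAt_const (1 : ℝ) (0 : ℝ))
    (hasDerivAt_rpow_mul_sub_kelvin hu hd rfl) (by simp [kelvin_of_dist_eq u hd rfl]) ?_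
  · linarith
  · filter_upwards [self_mem_nhdsWithin] with t ht
    have ht₀ : 0 < t := one_pos.trans ht
    refine mul_nonneg (by positivity) (sub_nonneg.2 (hgood _ ?_))
    rw [dist_lineMap_left, Real.norm_of_nonneg ht₀.le, dist_comm c]
    exact lt_mul_of_one_lt_left hd ht

theorem fderiv_eq_zero_of_forall_isGoodRadius {u : E → ℝ} (hu : Differentiable ℝ u)
    (hgood : ∀ c, ∀ r ≥ 0, IsGoodRadius u c r) (y : E) : fderiv ℝ u y = 0 := by
  ext v
  by_contra hv
  have hv₀ : v ≠ 0 := by rintro rfl; simp at hv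
  set s : ℝ := -(|(finrank ℝ E - 2) / 2 * u y| + 1) / fderiv ℝ u y v
  have hs : s • v ≠ 0 := smul_ne_zero (div_ne_zero (neg_ne_zero.2 (by positivity)) hv) hv₀
  have h := weightedRadialDeriv_nonneg_of_isGoodRadius hu (c := y - s • v) (y := y)
    (fun h => hs (sub_eq_self.1 h.symm)) (hgood _ _ dist_nonneg)
  rw [weightedRadialDeriv, sub_sub_cancel, map_smul, smul_eq_mul, div_mul_cancel₀ _ hv] at h
  linarith [le_abs_self ((finrank ℝ E - 2) / 2 * u y)]

theorem tendsto_norm_rpow_mul_of_kelvin_eq {u : E → ℝ} (hE : 2 ≤ finrank ℝ E) (hu : Continuous u)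
    {c : E} {r : ℝ} (hr : 0 ≤ r) (h : ∀ y, y ≠ c → kelvin u c r y = u y) :
    Tendsto (fun y => ‖y‖ ^ (finrank ℝ E - 2 : ℝ) * u y) (cobounded E)
      (𝓝 (r ^ (finrank ℝ E - 2 : ℝ) * u c)) := by
  refine (tendsto_norm_rpow_mul_kelvin hE hu c hr).congr' ?_
  filter_upwards [eventually_ne_cobounded c] with y hy
  rw [h y hy]

/-- The conformal factor `v` of the metric `v⁻² |dx|²` associated with `u`, that is, with
`u ^ (4 / (d - 2)) |dx|²` in dimension `d`. -/
noncomputable def conformalFactor (u : E → ℝ) (y : E) : ℝ :=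
  u y ^ (-(2 / (finrank ℝ E - 2)) : ℝ)

theorem conformalFactor_rpow {u : E → ℝ} (hE : 2 < finrank ℝ E) {y : E} (hy : 0 ≤ u y) :
    conformalFactor u y ^ (-((finrank ℝ E - 2) / 2) : ℝ) = u y := by
  have hE' : (0 : ℝ) < finrank ℝ E - 2 := sub_pos.2 (mod_cast hE)
  rw [conformalFactor, ← Real.rpow_mul hy, neg_mul_neg,
    ← inv_div _ (2 : ℝ), inv_mul_cancel₀ (by positivity), Real.rpow_one]

theorem conformalFactor_eq_mul_inversion {u : E → ℝ} (hE : 2 < finrank ℝ E) (hu : ∀ x, 0 ≤ u x)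
    {c : E} {r : ℝ} (hr : 0 ≤ r) {y : E} (h : kelvin u c r y = u y) :
    conformalFactor u y = (dist y c / r) ^ 2 * conformalFactor u (inversion c r y) := by
  rw [conformalFactor, ← h, kelvin,
    rpow_mul_rpow_neg_two_div (sub_pos.2 (mod_cast hE)).ne' (by positivity) (hu _), ← inv_pow,
    inv_div, conformalFactor]

theorem isLittleO_of_eq_mul_inversion {v : E → ℝ} {v' : E →L[ℝ] ℝ} {c : E} {r : ℝ} (hr : 0 < r)
    (hv : HasFDerivAt v v' c)
    (h : ∀ y, y ≠ c → v y = (dist y c / r) ^ 2 * v (inversion c r y)) :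
    (fun y => v y - v c / r ^ 2 * dist y c ^ 2 - v' (y - c)) =o[cobounded E] fun y => ‖y‖ := by
  have hne := eventually_ne_cobounded c
  have hexp := (isBigO_refl (fun y => (dist y c / r) ^ 2) (cobounded E)).mul_isLittleO
    (hv.isLittleO.comp_tendsto (tendsto_inversion_cobounded c r)).norm_right
  have hdist : (fun y => dist y c) =O[cobounded E] fun y => ‖y‖ := by
    simp only [dist_eq_norm]
    exact ((isBigO_refl id _).sub (isLittleO_const_id_cobounded c).isBigO).norm_left.norm_right
  refine (hexp.congr' ?_ ?_).trans_isBigO hdist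
  · filter_upwards [hne] with y hy
    have hd : 0 < dist y c := dist_pos.2 hy
    have hinv : inversion c r y - c = (r / dist y c) ^ 2 • (y - c) := inversion_vsub_center c r y
    rw [Function.comp_apply, hinv, map_smul, smul_eq_mul, h y hy]
    field_simp
  · filter_upwards [hne] with y hy
    have hd : 0 < dist y c := dist_pos.2 hy
    rw [Function.comp_apply, ← dist_eq_norm, dist_inversion_center]
    field_simp

theorem fderiv_sub_fderiv_of_isLittleO {v : E → ℝ} {A : ℝ} {x x' : E} {ℓ ℓ' : E →L[ℝ] ℝ}
    (h : (fun y => v y - A * dist y x ^ 2 - ℓ (y - x)) =o[cobounded E] fun y => ‖y‖)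
    (h' : (fun y => v y - A * dist y x' ^ 2 - ℓ' (y - x')) =o[cobounded E] fun y => ‖y‖) :
    ℓ - ℓ' = (2 * A) • innerSL ℝ (x - x') := by
  have hsub := (h'.sub h).congr_left
    (f₂ := fun y => (ℓ - ℓ' - (2 * A) • innerSL ℝ (x - x')) y +
      (A * ‖x‖ ^ 2 - A * ‖x'‖ ^ 2 + ℓ' x' - ℓ x)) fun y => by
    simp only [dist_eq_norm, norm_sub_sq_real, map_sub, sub_apply, smul_apply, innerSL_apply_apply,
      real_inner_comm, smul_eq_mul]
    ring
  exact sub_eq_zero.1 (eq_zero_of_isLittleO_cobounded hsub)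

theorem exists_eq_mul_dist_sq_add [CompleteSpace E] {v : E → ℝ} {A : ℝ} (hA : A ≠ 0)
    (hv : Differentiable ℝ v)
    (h : ∀ x, (fun y => v y - A * dist y x ^ 2 - fderiv ℝ v x (y - x)) =o[cobounded E]
      fun y => ‖y‖) :
    ∃ b, ∀ y, v y = A * dist y b ^ 2 + v b := by
  set b : E := -(2 * A)⁻¹ • ∇ v 0
  have hgrad : (2 * A) • innerSL ℝ b = -fderiv ℝ v 0 := by
    ext w
    simp only [b, smul_apply, innerSL_apply_apply, inner_smul_left, inner_gradient_left,
      conj_trivial, smul_eq_mul, neg_apply]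
    field_simp
  have hfderiv (x : E) : fderiv ℝ v x = (2 * A) • innerSL ℝ (x - b) := by
    rw [map_sub, smul_sub, hgrad, sub_neg_eq_add, ← sub_eq_iff_eq_add,
      fderiv_sub_fderiv_of_isLittleO (h x) (h 0), sub_zero]
  have hw (x : E) : HasFDerivAt (𝕜 := ℝ) (fun y => v y - A * dist y b ^ 2) 0 x := by
    refine ((hv x).hasFDerivAt.sub ((hasFDerivAt_dist_sq b x).const_mul A)).congr_fderiv ?_
    rw [hfderiv x, smul_smul, mul_comm A, sub_self]
  refine ⟨b, fun y => ?_⟩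
  have := is_const_of_fderiv_eq_zero (fun x => (hw x).differentiableAt) (fun x => (hw x).fderiv) y b
  simp only [dist_self] at this
  linarith

variable [FiniteDimensional ℝ E]

theorem laplacian_rpow_mul_dist_sq_add (A : ℝ) {C : ℝ} (hC : C ≠ 0) (p : ℝ) (b : E) :
    Δ (fun y => (A * dist y b ^ 2 + C) ^ p) b = 2 * finrank ℝ E * A * p * C ^ (p - 1) := by
  have h : (fun y => (A * dist y b ^ 2 + C) ^ p) = (fun t => (A * t + C) ^ p) ∘ (dist · b ^ 2) :=
    rfl
  have hlin : HasDerivAt (fun t => A * t + C) A 0 := by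
    simpa using ((hasDerivAt_id (0 : ℝ)).const_mul A).add_const C
  have hderiv : deriv (fun t => (A * t + C) ^ p) 0 = A * p * C ^ (p - 1) := by
    simpa using (hlin.rpow_const (p := p) (Or.inl (by simpa using hC))).deriv
  rw [h, laplacian_comp_real ?_ (contDiff_dist_sq b).contDiffAt, gradient_dist_sq,
    laplacian_dist_sq, dist_self, zero_pow two_ne_zero, hderiv, sub_self, smul_zero, norm_zero,
    zero_pow two_ne_zero, zero_smul, zero_add, smul_eq_mul]
  · ring
  · rw [dist_self]
    exact ((contDiffAt_const.mul contDiffAt_id).add contDiffAt_const).rpow_const_of_ne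
      (by simpa using hC)

namespace IsPositiveSolution

variable {u : E → ℝ}

theorem exists_center_kelvin_eq (hu : IsPositiveSolution u) (hE : 2 < finrank ℝ E) :
    ∃ c, ∃ r > 0, ∀ y, y ≠ c → kelvin u c r y = u y := by
  by_contra! hnone
  have hgood (c : E) : ∀ r, 0 ≤ r → IsGoodRadius u c r :=
    (hu.forall_isGoodRadius_or_exists_kelvin_eq hE c).resolve_right fun ⟨r, hr, h⟩ =>
      let ⟨y, hy, hne⟩ := hnone c r hr
      hne (h y hy)
  have hdiff := hu.contDiff.differentiable two_ne_zero
  have hconst : u = fun _ => u 0 := funext fun y =>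
    is_const_of_fderiv_eq_zero hdiff (fderiv_eq_zero_of_forall_isGoodRadius hdiff hgood) y 0
  have hlap := hu.laplacian_neg hE 0
  rw [hconst, laplacian_const] at hlap
  exact hlap.false

theorem exists_kelvin_eq (hu : IsPositiveSolution u) (hE : 2 < finrank ℝ E) (x : E) :
    ∃ r > 0, ∀ y, y ≠ x → kelvin u x r y = u y := by
  have : Nontrivial E := nontrivial_of_finrank_pos (two_pos.trans hE)
  refine (hu.forall_isGoodRadius_or_exists_kelvin_eq hE x).resolve_left fun hgood => ?_
  obtain ⟨c, l, hl, hc⟩ := hu.exists_center_kelvin_eq hE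
  have hlim := tendsto_norm_rpow_mul_of_kelvin_eq hE.le hu.contDiff.continuous hl.le hc
  have hbdd (r : ℝ) (hr : 0 ≤ r) :
      r ^ (finrank ℝ E - 2 : ℝ) * u x ≤ l ^ (finrank ℝ E - 2 : ℝ) * u c := by
    refine le_of_tendsto_of_tendsto
      (tendsto_norm_rpow_mul_kelvin hE.le hu.contDiff.continuous x hr) hlim ?_
    filter_upwards [(tendsto_dist_right_cobounded_atTop x).eventually_gt_atTop r] with y hy
    gcongr
    exact hgood r hr y hy
  have hunbdd := (tendsto_rpow_atTop (sub_pos.2 (mod_cast hE) : (0 : ℝ) < finrank ℝ E - 2)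
    ).atTop_mul_const (hu.pos x)
  obtain ⟨r, hr, hlt⟩ := ((eventually_ge_atTop 0).and (hunbdd.eventually_gt_atTop _)).exists
  exact (hbdd r hr).not_gt hlt

theorem conformalFactor_pos (hu : IsPositiveSolution u) (y : E) : 0 < conformalFactor u y :=
  Real.rpow_pos_of_pos (hu.pos y) _

theorem differentiable_conformalFactor (hu : IsPositiveSolution u) :
    Differentiable ℝ (conformalFactor u) := fun y =>
  ((hu.contDiff.differentiable two_ne_zero) y).rpow_const (Or.inl (hu.pos y).ne')

theorem exists_conformalFactor_isLittleO (hu : IsPositiveSolution u) (hE : 2 < finrank ℝ E) :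
    ∃ A > 0, ∀ x, (fun y => conformalFactor u y - A * dist y x ^ 2 -
      fderiv ℝ (conformalFactor u) x (y - x)) =o[cobounded E] fun y => ‖y‖ := by
  have : Nontrivial E := nontrivial_of_finrank_pos (two_pos.trans hE)
  choose r hr hkelvin using hu.exists_kelvin_eq hE
  have hlim (x : E) := tendsto_norm_rpow_mul_of_kelvin_eq hE.le hu.contDiff.continuous (hr x).le
    (hkelvin x)
  have hq : (finrank ℝ E - 2 : ℝ) ≠ 0 := (sub_pos.2 (mod_cast hE)).ne'
  refine ⟨(r 0 ^ 2)⁻¹ * conformalFactor u 0,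
    mul_pos (inv_pos.2 (pow_pos (hr 0) 2)) (hu.conformalFactor_pos 0), fun x => ?_⟩
  have hA : (r 0 ^ 2)⁻¹ * conformalFactor u 0 = conformalFactor u x / r x ^ 2 := by
    rw [div_eq_inv_mul, conformalFactor, conformalFactor,
      ← rpow_mul_rpow_neg_two_div hq (hr 0).le (hu.pos 0).le,
      ← rpow_mul_rpow_neg_two_div hq (hr x).le (hu.pos x).le, tendsto_nhds_unique (hlim 0) (hlim x)]
  rw [hA]
  exact isLittleO_of_eq_mul_inversion (hr x) (hu.differentiable_conformalFactor x).hasFDerivAt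
    fun y hy => conformalFactor_eq_mul_inversion hE (fun z => (hu.pos z).le) (hr x).le
      (hkelvin x y hy)

theorem mul_eq_one_of_eq_rpow (hu : IsPositiveSolution u) (hE : 2 < finrank ℝ E) {A C : ℝ} {b : E}
    (hC : 0 < C) (h : ∀ y, u y = (A * dist y b ^ 2 + C) ^ (-((finrank ℝ E - 2) / 2) : ℝ)) :
    A * C = 1 := by
  have hE' : (0 : ℝ) < finrank ℝ E - 2 := sub_pos.2 (mod_cast hE)
  have heq := hu.neg_laplacian b
  have hu' : u = fun y => (A * dist y b ^ 2 + C) ^ (-((finrank ℝ E - 2) / 2) : ℝ) := funext h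
  have hub : u b ^ ((finrank ℝ E + 2) / (finrank ℝ E - 2) : ℝ) =
      C ^ (-((finrank ℝ E - 2) / 2) - 1 : ℝ) / C := by
    rw [h b, dist_self, zero_pow two_ne_zero, mul_zero, zero_add, ← Real.rpow_mul hC.le,
      ← Real.rpow_sub_one hC.ne']
    congr 1
    field_simp
    ring
  rw [hub, hu', laplacian_rpow_mul_dist_sq_add A hC.ne'] at heq
  have : 0 < C ^ (-((finrank ℝ E - 2) / 2) - 1 : ℝ) := Real.rpow_pos_of_pos hC _
  have : (0 : ℝ) < finrank ℝ E := mod_cast two_pos.trans hE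
  field_simp at heq
  linarith

end IsPositiveSolution

end Classification

end CriticalEquation

open CriticalEquation

theorem critical_equation_rigidity_general
    {E : Type*} [NormedAddCommGroup E] [InnerProductSpace ℝ E] [FiniteDimensional ℝ E]
    {u : E → ℝ} (hu : IsPositiveSolution u) (hE : 2 < finrank ℝ E) :
    ∃ lam > (0 : ℝ), ∃ x₀ : E, ∀ x, u x = lam ^ ((finrank ℝ E - 2 : ℝ) / 2) *
      (1 + lam ^ 2 * ‖x - x₀‖ ^ 2) ^ (-((finrank ℝ E - 2 : ℝ) / 2)) := by
  obtain ⟨A, hA, hlittle⟩ := hu.exists_conformalFactor_isLittleO hE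
  obtain ⟨b, hb⟩ := exists_eq_mul_dist_sq_add hA.ne' hu.differentiable_conformalFactor hlittle
  have huy (y : E) : u y =
      (A * dist y b ^ 2 + conformalFactor u b) ^ (-((finrank ℝ E - 2) / 2) : ℝ) := by
    rw [← hb, conformalFactor_rpow hE (hu.pos y).le]
  have hAC := hu.mul_eq_one_of_eq_rpow hE (hu.conformalFactor_pos b) huy
  exact ⟨A, hA, b, fun y => by rw [huy y, dist_eq_norm,
    mul_add_rpow_neg_of_mul_eq_one hA hAC (by positivity)]⟩

/-- Classification of positive smooth solutions of the critical equation
`-Δu = n(n-2)u^{(n+2)/(n-2)}` on `ℝⁿ` (Obata-type rigidity): every solution is a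
standard bubble `u(x) = λ^{(n-2)/2}(1+λ²|x-x₀|²)^{-(n-2)/2}`. -/
theorem critical_equation_rigidity
    (n : ℕ) (hn : 3 ≤ n)
    (u : EuclideanSpace ℝ (Fin n) → ℝ)
    (hu : ContDiff ℝ (⊤ : ℕ∞) u) (hpos : ∀ x, 0 < u x)
    (heq : ∀ x, -(lap u x)
      = (n : ℝ) * ((n : ℝ) - 2) * u x ^ (((n : ℝ) + 2) / ((n : ℝ) - 2))) :
    ∃ lam > (0 : ℝ), ∃ x₀ : EuclideanSpace ℝ (Fin n),
      ∀ x, u x = lam ^ (((n : ℝ) - 2) / 2)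
        * (1 + lam ^ 2 * ‖x - x₀‖ ^ 2) ^ (-(((n : ℝ) - 2) / 2)) := by
  have hlap := lap_eq_laplacian (contDiff_infty.1 hu 2)
  simpa only [finrank_euclideanSpace_fin] using
    critical_equation_rigidity_general ⟨contDiff_infty.1 hu 2, hpos, fun x => by
      simpa only [finrank_euclideanSpace_fin, hlap] using heq x⟩
      (by rwa [finrank_euclideanSpace_fin])
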